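/- arXiv:0912.5079 — 2 statements merged into one kernel-verified Lean document; each statement's English description precedes it below -/
import Mathlib

section
/- Under any uniformly avoiding source μ, for all indices i < j with j ≥ i + k, the probability that the k-windows at positions i and j coincide satisfies μ(W_i = W_j) ≤ 1/(σ-k)^k. -/
open MeasureTheory ProbabilityTheory
open scoped Classical ENNReal

noncomputable section

/-- The `k`-window at position `i` of an infinite string `ω : ℕ → Fin σ`. -/
def Window {σ : ℕ} (k i : ℕ) (ω : ℕ → Fin σ) : Fin k → Fin σ :=
  fun t => ω (i + t)

/-- A *uniformly avoiding source*: a probability measure `μ` on `ℕ → Fin σ`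
(with the product σ-algebra) such that (i) almost surely the first `k`
coordinates are pairwise distinct, and (ii) conditioned on any positive-probability
history of length `n ≥ k` whose last `k` entries are pairwise distinct, the next
character is uniform on the `σ - k` characters not among the last `k` entries. -/
def UniformlyAvoiding {σ : ℕ} (k : ℕ) (μ : Measure (ℕ → Fin σ)) : Prop :=
  IsProbabilityMeasure μ ∧
  (∀ᵐ ω ∂μ, ∀ i j : ℕ, i < k → j < k → i ≠ j → ω i ≠ ω j) ∧
  ∀ n : ℕ, k ≤ n → ∀ a : ℕ → Fin σ,
    μ {ω | ∀ t < n, ω t = a t} ≠ 0 →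
    (∀ p q : ℕ, n - k ≤ p → p < n → n - k ≤ q → q < n → p ≠ q → a p ≠ a q) →
    ∀ b : Fin σ,
      (μ[|{ω | ∀ t < n, ω t = a t}]) {ω | ω n = b} =
        if ∃ t : ℕ, n - k ≤ t ∧ t < n ∧ a t = b then 0
        else 1 / ((σ - k : ℕ) : ℝ≥0∞)

/-!
Reveal the source one symbol at a time. Given the symbols before position `n`, the symbol `X n`
equals any prescribed function of them with conditional probability at most `1 / (σ - k)`, provided
`k ≤ n`; when `n < k` it differs almost surely from all earlier symbols. Comparing the windows at
`i < j` from left to right, the `t`-th comparison asks that `X (j + t)` equal the earlier symbol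
`X (i + t)`, so each comparison costs a factor `1 / (σ - k)`.
-/

section Cylinder

open PiNat Set

theorem measure_preimage_inter_le_mul {Ω ι : Type*} [MeasurableSpace Ω] [Countable ι]
    {μ : Measure Ω} {r : Ω → ι} (hr : ∀ y, MeasurableSet (r ⁻¹' {y})) {S : Set ι} {A : Set Ω}
    {c : ℝ≥0∞} (h : ∀ y ∈ S, μ (r ⁻¹' {y} ∩ A) ≤ c * μ (r ⁻¹' {y})) :
    μ (r ⁻¹' S ∩ A) ≤ c * μ (r ⁻¹' S) := by
  have hcover : r ⁻¹' S ∩ A = ⋃ y : S, r ⁻¹' {y.1} ∩ A := by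
    ext ω
    simp
  calc μ (r ⁻¹' S ∩ A)
      ≤ ∑' y : S, μ (r ⁻¹' {y.1} ∩ A) := hcover ▸ measure_iUnion_le _
    _ ≤ ∑' y : S, c * μ (r ⁻¹' {y.1}) := ENNReal.tsum_le_tsum fun y => h y y.2
    _ = c * μ (r ⁻¹' S) := by
      rw [ENNReal.tsum_mul_left, tsum_measure_preimage_singleton S.to_countable fun y _ => hr y]

variable {α : ℕ → Type*}

theorem domRestrict_Iio_preimage_singleton (x : ∀ i, α i) (n : ℕ) :
    (Iio n).domRestrict ⁻¹' {(Iio n).domRestrict x} = cylinder x n := by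
  ext y
  simp [funext_iff, mem_cylinder_iff]

variable [∀ i, MeasurableSpace (α i)] [∀ i, MeasurableSingletonClass (α i)]

theorem measurableSet_cylinder (x : ∀ i, α i) (n : ℕ) : MeasurableSet (cylinder x n) := by
  rw [cylinder_eq_pi]
  exact .pi (Finset.countable_toSet _) fun _ _ => measurableSet_singleton _

theorem measure_inter_le_mul_of_cylinder_le [∀ i, Countable (α i)] {μ : Measure (∀ i, α i)} {n : ℕ}
    {E A : Set (∀ i, α i)} {c : ℝ≥0∞} (hE : DependsOn (· ∈ E) (Iio n))
    (h : ∀ x ∈ E, μ (cylinder x n ∩ A) ≤ c * μ (cylinder x n)) :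
    μ (E ∩ A) ≤ c * μ E := by
  obtain ⟨S, hS⟩ := dependsOn_iff_exists_comp.1 hE
  obtain rfl : E = (Iio n).domRestrict ⁻¹' {y | S y} := by
    ext x
    exact iff_of_eq (congrFun hS x)
  refine measure_preimage_inter_le_mul
    (fun y => measurable_restrict _ (measurableSet_singleton y)) fun y hy => ?_
  rcases ((Iio n).domRestrict ⁻¹' {y}).eq_empty_or_nonempty with hempty | ⟨x, rfl⟩
  · simp [hempty]
  · rw [domRestrict_Iio_preimage_singleton]
    exact h x hy

end Cylinder

section Window

variable {σ : ℕ}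

theorem dependsOn_window (k i : ℕ) : DependsOn (Window (σ := σ) k i) (Set.Ico i (i + k)) :=
  fun _ _ h => funext fun t => h (i + t) ⟨by omega, by omega⟩

theorem window_succ_eq_window_succ_iff {k i j : ℕ} {ω : ℕ → Fin σ} :
    Window (k + 1) i ω = Window (k + 1) j ω ↔
      Window k i ω = Window k j ω ∧ ω (j + k) = ω (i + k) := by
  simp [Window, funext_iff, Fin.forall_fin_succ', eq_comm]

end Window

namespace UniformlyAvoiding

open PiNat Set

variable {σ k : ℕ} {μ : Measure (ℕ → Fin σ)} {n : ℕ} {a : ℕ → Fin σ}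

theorem ae_injOn_Iio (hμ : UniformlyAvoiding k μ) : ∀ᵐ ω ∂μ, InjOn ω (Iio k) := by
  filter_upwards [hμ.2.1] with ω hω p hp q hq heq
  by_contra hpq
  exact hω p q hp hq hpq heq

theorem measure_cylinder_inter_eq (hμ : UniformlyAvoiding k μ) (hn : k ≤ n)
    (ha : InjOn a (Ico (n - k) n)) (b : Fin σ) :
    μ (cylinder a n ∩ {ω | ω n = b}) =
      if b ∈ a '' Ico (n - k) n then 0 else 1 / ((σ - k : ℕ) : ℝ≥0∞) * μ (cylinder a n) := by
  have := hμ.1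
  by_cases hpos : μ (cylinder a n) = 0
  · simp [hpos, measure_inter_null_of_null_left]
  have hcond : μ[{ω | ω n = b} | cylinder a n] =
      if b ∈ a '' Ico (n - k) n then 0 else 1 / ((σ - k : ℕ) : ℝ≥0∞) := by
    simpa only [PiNat.cylinder, mem_image, mem_Ico, and_assoc] using hμ.2.2 n hn a hpos
      (fun p q hp hp' hq hq' hpq => ha.ne ⟨hp, hp'⟩ ⟨hq, hq'⟩ hpq) b
  rw [← cond_mul_eq_inter (measurableSet_cylinder a n), hcond, ite_mul, zero_mul]

theorem injOn_Iio_of_measure_cylinder_ne_zero (hμ : UniformlyAvoiding k μ) (hn : n ≤ k)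
    (hpos : μ (cylinder a n) ≠ 0) : InjOn a (Iio n) := by
  obtain ⟨ω, hωa, hω⟩ :=
    Measure.exists_mem_of_measure_ne_zero_of_ae hpos (ae_restrict_of_ae hμ.ae_injOn_Iio)
  exact (hω.mono (Iio_subset_Iio hn)).congr hωa

theorem injOn_Ico_of_measure_cylinder_ne_zero (hμ : UniformlyAvoiding k μ) (hn : k ≤ n)
    (hpos : μ (cylinder a n) ≠ 0) : InjOn a (Ico (n - k) n) := by
  induction n, hn using Nat.le_induction with
  | base => exact (hμ.injOn_Iio_of_measure_cylinder_ne_zero le_rfl hpos).mono Ico_subset_Iio_self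
  | succ n hn ih =>
    have hinj : InjOn a (Ico (n - k) n) :=
      ih fun h => hpos (measure_mono_null (cylinder_anti a n.le_succ) h)
    have hnext : a n ∉ a '' Ico (n - k) n := by
      intro hmem
      have hnull := hμ.measure_cylinder_inter_eq hn hinj (a n)
      rw [if_pos hmem] at hnull
      have hsub : cylinder a (n + 1) ⊆ cylinder a n ∩ {ω | ω n = a n} :=
        fun ω hω => ⟨cylinder_anti a n.le_succ hω, hω n n.lt_succ_self⟩
      exact hpos (measure_mono_null hsub hnull)
    refine ((injOn_insert right_notMem_Ico).2 ⟨hinj, hnext⟩).mono fun t ht => ?_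
    grind

theorem measure_inter_apply_eq_le (hμ : UniformlyAvoiding k μ) (hn : k ≤ n) {E : Set (ℕ → Fin σ)}
    {g : (ℕ → Fin σ) → Fin σ} (hE : DependsOn (· ∈ E) (Iio n)) (hg : DependsOn g (Iio n)) :
    μ (E ∩ {ω | ω n = g ω}) ≤ 1 / ((σ - k : ℕ) : ℝ≥0∞) * μ E := by
  refine measure_inter_le_mul_of_cylinder_le hE fun x _ => ?_
  have hgx : cylinder x n ∩ {ω | ω n = g ω} = cylinder x n ∩ {ω | ω n = g x} := by
    ext ω
    refine and_congr_right fun hω => ?_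
    simp only [mem_ofPred_eq, hg hω]
  by_cases hpos : μ (cylinder x n) = 0
  · simp [hpos, measure_inter_null_of_null_left]
  rw [hgx, hμ.measure_cylinder_inter_eq hn (hμ.injOn_Ico_of_measure_cylinder_ne_zero hn hpos)]
  split_ifs
  · exact zero_le
  · exact le_rfl

theorem measure_inter_apply_eq_apply_le (hμ : UniformlyAvoiding k μ) {s : ℕ} (hs : s < n)
    {E : Set (ℕ → Fin σ)} (hE : DependsOn (· ∈ E) (Iio n)) :
    μ (E ∩ {ω | ω n = ω s}) ≤ 1 / ((σ - k : ℕ) : ℝ≥0∞) * μ E := by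
  obtain hn | hn := le_or_gt k n
  · exact hμ.measure_inter_apply_eq_le hn hE fun _ _ h => h s hs
  · have hne : ∀ᵐ ω ∂μ, ω n ≠ ω s := by
      filter_upwards [hμ.ae_injOn_Iio] with ω hinj using hinj.ne hn (hs.trans hn) hs.ne'
    have hnull : μ {ω | ω n = ω s} = 0 := by
      simpa only [ae_iff, not_not] using hne
    simp [measure_inter_null_of_null_right _ hnull]

theorem measure_window_eq_le_of_lt (hμ : UniformlyAvoiding k μ) {i j : ℕ} (hij : i < j) (m : ℕ) :
    μ {ω | Window m i ω = Window m j ω} ≤ (1 / ((σ - k : ℕ) : ℝ≥0∞)) ^ m := by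
  have := hμ.1
  induction m with
  | zero => simpa using prob_le_one
  | succ m ih =>
    have hpast : DependsOn (· ∈ {ω : ℕ → Fin σ | Window m i ω = Window m j ω}) (Iio (j + m)) := by
      intro ω ω' h
      have hi := dependsOn_window m i fun t ht => h t (by grind)
      have hj := dependsOn_window m j fun t ht => h t ht.2
      simp only [mem_ofPred_eq, hi, hj]
    calc μ {ω | Window (m + 1) i ω = Window (m + 1) j ω}
        = μ ({ω | Window m i ω = Window m j ω} ∩ {ω | ω (j + m) = ω (i + m)}) := by
          simp only [window_succ_eq_window_succ_iff, ofPred_and]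
      _ ≤ 1 / ((σ - k : ℕ) : ℝ≥0∞) * μ {ω | Window m i ω = Window m j ω} :=
          hμ.measure_inter_apply_eq_apply_le (by omega) hpast
      _ ≤ (1 / ((σ - k : ℕ) : ℝ≥0∞)) ^ (m + 1) := by
          rw [pow_succ']
          gcongr

end UniformlyAvoiding

theorem window_collision_prob_le_general {σ k : ℕ} {μ : Measure (ℕ → Fin σ)}
    (hμ : UniformlyAvoiding k μ) {i j : ℕ} (hij : i ≠ j) (m : ℕ) :
    μ {ω | Window m i ω = Window m j ω} ≤ 1 / ((σ - k : ℕ) : ℝ≥0∞) ^ m := by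
  wlog hlt : i < j generalizing i j
  · simpa only [eq_comm] using this hij.symm (hij.lt_or_gt.resolve_left hlt)
  · simpa only [one_div, ENNReal.inv_pow] using hμ.measure_window_eq_le_of_lt hlt m

/-- Under any uniformly avoiding source `μ`, for all indices `i < j` with `j ≥ i + k`,
the probability that the `k`-windows at positions `i` and `j` coincide is at most
`1/(σ-k)^k`. -/
theorem window_collision_prob_le {σ k : ℕ} (hk : 1 ≤ k) (hσ : k < σ)
    (μ : Measure (ℕ → Fin σ)) (hμ : UniformlyAvoiding k μ)
    (i j : ℕ) (hij : i < j) (hjk : i + k ≤ j) :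
    μ {ω | Window k i ω = Window k j ω} ≤ 1 / ((σ - k : ℕ) : ℝ≥0∞) ^ k :=
  window_collision_prob_le_general hμ hij.ne k
end
end

section
/- Quantitative duplicate bound: under any uniformly avoiding source μ, for every n ≥ k, the probability that some k-tuple occurs twice among the first n emitted characters — i.e., that there exist indices 0 ≤ i < j ≤ n - k with W_i = W_j — is at most n(n-1)/(2(σ-k)^k). -/
open MeasureTheory ProbabilityTheory
open scoped Classical ENNReal

noncomputable section

/-!
From time `k` on, each character has conditional probability at most `(σ - k)⁻¹` given the whole
past: the avoidance rule keeps the last `k` characters of every history of positive probability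
distinct, so the uniform law always applies. Hence, for `i < j` and `k ≤ j`, reading the window at
`j` one character at a time, each has to hit a character already determined by the past, namely the
one `j - i` places earlier, even when the two windows overlap. This gives probability at most
`(σ - k)⁻ᵏ`. When `j < k` the two windows start with distinct characters almost surely. A union
bound over the pairs `i < j` finishes the proof.
-/

section UnionBound

variable {Ω : Type*} [MeasurableSpace Ω] {μ : Measure Ω} {c : ℝ≥0∞} {m : ℕ}

lemma sum_range_id_eq_choose_two (m : ℕ) : ∑ j ∈ Finset.range m, j = m.choose 2 := by
  rw [Finset.sum_range_id, Nat.choose_two_right]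

lemma measure_exists_lt_le_choose_two_mul {s : ℕ → ℕ → Set Ω}
    (hs : ∀ i j, i < j → j < m → μ (s i j) ≤ c) :
    μ {ω | ∃ i j, i < j ∧ j < m ∧ ω ∈ s i j} ≤ m.choose 2 * c := by
  have hunion : {ω | ∃ i j, i < j ∧ j < m ∧ ω ∈ s i j} =
      ⋃ j ∈ Finset.range m, ⋃ i ∈ Finset.range j, s i j := by
    ext ω
    simp only [Set.mem_ofPred_eq, Set.mem_iUnion, Finset.mem_range, exists_prop]
    grind
  calc μ {ω | ∃ i j, i < j ∧ j < m ∧ ω ∈ s i j}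
      ≤ ∑ j ∈ Finset.range m, ∑ i ∈ Finset.range j, μ (s i j) := by
        rw [hunion]
        exact (measure_biUnion_finset_le _ _).trans
          (Finset.sum_le_sum fun j _ => measure_biUnion_finset_le _ _)
    _ ≤ ∑ j ∈ Finset.range m, ∑ _i ∈ Finset.range j, c :=
        Finset.sum_le_sum fun j hj => Finset.sum_le_sum fun i hi =>
          hs i j (Finset.mem_range.1 hi) (Finset.mem_range.1 hj)
    _ = m.choose 2 * c := by
        simp only [Finset.sum_const, Finset.card_range, nsmul_eq_mul]
        rw [← Finset.sum_mul, ← Nat.cast_sum, sum_range_id_eq_choose_two]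

end UnionBound

section FibrewiseBound

variable {Ω β : Type*} [MeasurableSpace Ω] {μ : Measure Ω} {c : ℝ≥0∞}

lemma measure_preimage_inter_le_mul_s8 {f : Ω → β} {S : Set β} {F : Set Ω} (hS : S.Countable)
    (hf : ∀ y ∈ S, MeasurableSet (f ⁻¹' {y}))
    (hF : ∀ y ∈ S, μ (f ⁻¹' {y} ∩ F) ≤ c * μ (f ⁻¹' {y})) :
    μ (f ⁻¹' S ∩ F) ≤ c * μ (f ⁻¹' S) := by
  have hmeas : MeasurableSet (f ⁻¹' S) := by
    rw [← Set.biUnion_preimage_singleton]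
    exact .biUnion hS hf
  calc μ (f ⁻¹' S ∩ F)
      = ∑' y : S, μ (f ⁻¹' {↑y} ∩ F) := by
        rw [← Measure.restrict_apply hmeas, ← tsum_measure_preimage_singleton hS hf]
        exact tsum_congr fun y => Measure.restrict_apply (hf y y.2)
    _ ≤ ∑' y : S, c * μ (f ⁻¹' {↑y}) := ENNReal.tsum_le_tsum fun y => hF y y.2
    _ = c * μ (f ⁻¹' S) := by rw [ENNReal.tsum_mul_left, tsum_measure_preimage_singleton hS hf]

end FibrewiseBound

section Sequences

variable {α : Type*}

lemma injOn_Ico_of_lt_imp_ne {a : ℕ → α} {n k : ℕ}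
    (h : ∀ p q, p < q → q < n → q ≤ p + k → a p ≠ a q) : Set.InjOn a (Set.Ico (n - k) n) := by
  rintro p ⟨hp, hpn⟩ q ⟨hq, hqn⟩ heq
  obtain hpq | hpq | hqp := lt_trichotomy p q
  · exact absurd heq (h p q hpq hqn (by lia))
  · exact hpq
  · exact absurd heq.symm (h q p hqp hpn (by lia))

lemma preimage_res_singleton (a : ℕ → α) (n : ℕ) :
    (PiNat.res · n) ⁻¹' {PiNat.res a n} = PiNat.cylinder a n :=
  (PiNat.cylinder_eq_res a n).symm

lemma cylinder_succ (a : ℕ → α) (n : ℕ) :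
    PiNat.cylinder a (n + 1) = PiNat.cylinder a n ∩ {ω | ω n = a n} :=
  Set.ext fun _ => Nat.forall_lt_succ_right

variable [MeasurableSpace α] [MeasurableSingletonClass α]

lemma measurableSet_piNat_cylinder (a : ℕ → α) (n : ℕ) : MeasurableSet (PiNat.cylinder a n) := by
  rw [PiNat.cylinder_eq_pi]
  exact .pi (Finset.countable_toSet _) fun _ _ => measurableSet_singleton _

lemma measure_inter_le_mul_of_cylinder [Countable α] {μ : Measure (ℕ → α)} {c : ℝ≥0∞} {n : ℕ}
    {E F : Set (ℕ → α)} (hE : DependsOn (· ∈ E) (Set.Iio n))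
    (hF : ∀ a ∈ E, μ (PiNat.cylinder a n ∩ F) ≤ c * μ (PiNat.cylinder a n)) :
    μ (E ∩ F) ≤ c * μ E := by
  have hpre : (PiNat.res · n) ⁻¹' ((PiNat.res · n) '' E) = E := by
    refine Set.Subset.antisymm ?_ (Set.subset_preimage_image _ _)
    rintro ω ⟨a, ha, hres⟩
    exact (hE fun _ ht => PiNat.res_eq_res.1 hres ht).mp ha
  rw [← hpre]
  apply measure_preimage_inter_le_mul_s8 (Set.to_countable _)
  · rintro _ ⟨a, -, rfl⟩
    exact preimage_res_singleton a n ▸ measurableSet_piNat_cylinder a n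
  · rintro _ ⟨a, ha, rfl⟩
    exact preimage_res_singleton a n ▸ hF a ha

/-- From time `N` on, the next symbol of the process with law `μ` takes any given value with
conditional probability at most `c`, whatever the history. Phrasing this with products rather than
with `ProbabilityTheory.cond` avoids an exception for histories of probability zero. -/
def NextSymbolProbLE (μ : Measure (ℕ → α)) (N : ℕ) (c : ℝ≥0∞) : Prop :=
  ∀ n, N ≤ n → ∀ (a : ℕ → α) (b : α),
    μ (PiNat.cylinder a n ∩ {ω | ω n = b}) ≤ c * μ (PiNat.cylinder a n)

namespace NextSymbolProbLE

variable [Countable α] {μ : Measure (ℕ → α)} {N : ℕ} {c : ℝ≥0∞}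

lemma measure_inter_apply_eq_le (hμ : NextSymbolProbLE μ N c) {i n : ℕ} (hin : i < n)
    (hn : N ≤ n) {E : Set (ℕ → α)} (hE : DependsOn (· ∈ E) (Set.Iio n)) :
    μ (E ∩ {ω | ω i = ω n}) ≤ c * μ E := by
  refine measure_inter_le_mul_of_cylinder hE fun a _ => ?_
  refine (measure_mono ?_).trans (hμ n hn a (a i))
  rintro ω ⟨hω, heq⟩
  exact ⟨hω, heq.symm.trans (hω i hin)⟩

lemma measure_forall_apply_add_eq_le (hμ : NextSymbolProbLE μ N c) {i j : ℕ} (hij : i < j)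
    (hj : N ≤ j) (m : ℕ) :
    μ {ω | ∀ t < m, ω (i + t) = ω (j + t)} ≤ c ^ m * μ Set.univ := by
  induction m with
  | zero => simp
  | succ m ih =>
    have hdep : DependsOn (· ∈ {ω : ℕ → α | ∀ t < m, ω (i + t) = ω (j + t)})
        (Set.Iio (j + m)) := by
      intro ω ω' h
      refine propext (forall₂_congr fun t ht => ?_)
      rw [h (i + t) (Set.mem_Iio.2 (by lia)), h (j + t) (Set.mem_Iio.2 (by lia))]
    calc μ {ω | ∀ t < m + 1, ω (i + t) = ω (j + t)}
        = μ ({ω | ∀ t < m, ω (i + t) = ω (j + t)} ∩ {ω | ω (i + m) = ω (j + m)}) :=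
          congrArg μ (Set.ext fun _ => Nat.forall_lt_succ_right)
      _ ≤ c * μ {ω | ∀ t < m, ω (i + t) = ω (j + t)} :=
          hμ.measure_inter_apply_eq_le (by lia) (by lia) hdep
      _ ≤ c * (c ^ m * μ Set.univ) := by gcongr
      _ = c ^ (m + 1) * μ Set.univ := by rw [pow_succ', mul_assoc]

end NextSymbolProbLE

end Sequences

namespace UniformlyAvoiding

variable {σ k : ℕ} {μ : Measure (ℕ → Fin σ)}

lemma measure_cylinder_inter (hμ : UniformlyAvoiding k μ) {n : ℕ} (hn : k ≤ n)
    {a : ℕ → Fin σ} (ha : Set.InjOn a (Set.Ico (n - k) n)) (b : Fin σ) :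
    μ (PiNat.cylinder a n ∩ {ω | ω n = b}) =
      (if b ∈ a '' Set.Ico (n - k) n then 0 else ((σ - k : ℕ) : ℝ≥0∞)⁻¹) *
        μ (PiNat.cylinder a n) := by
  obtain ⟨_, -, hnext⟩ := hμ
  by_cases hnull : μ (PiNat.cylinder a n) = 0
  · rw [hnull, mul_zero, measure_inter_null_of_null_left _ hnull]
  · have hcond := hnext n hn a hnull
      (fun p q hp hp' hq hq' hpq => ha.ne ⟨hp, hp'⟩ ⟨hq, hq'⟩ hpq) b
    rw [← cond_mul_eq_inter (measurableSet_piNat_cylinder a n)]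
    simp only [Set.mem_image, Set.mem_Ico, and_assoc, ← one_div]
    exact congrArg (· * μ (PiNat.cylinder a n)) hcond

lemma measure_apply_eq_of_lt (hμ : UniformlyAvoiding k μ) {p q : ℕ} (hpq : p < q) (hq : q < k) :
    μ {ω | ω p = ω q} = 0 :=
  measure_eq_zero_iff_ae_notMem.2 <|
    hμ.2.1.mono fun _ hdistinct => hdistinct p q (hpq.trans hq) hq hpq.ne

lemma apply_ne_of_measure_cylinder_ne_zero (hμ : UniformlyAvoiding k μ) {a : ℕ → Fin σ} {n : ℕ}
    (ha : μ (PiNat.cylinder a n) ≠ 0) {p q : ℕ} (hpq : p < q) (hqn : q < n) (hqp : q ≤ p + k) :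
    a p ≠ a q := by
  induction n generalizing p q with
  | zero => lia
  | succ n ih =>
    have hprefix : μ (PiNat.cylinder a n) ≠ 0 :=
      fun h => ha (measure_mono_null (PiNat.cylinder_anti a n.le_succ) h)
    obtain hlt | rfl := Nat.lt_succ_iff_lt_or_eq.1 hqn
    · exact ih hprefix hpq hlt hqp
    intro heq
    apply ha
    obtain hqk | hkq := lt_or_ge q k
    · refine measure_mono_null (fun ω hω => ?_) (hμ.measure_apply_eq_of_lt hpq hqk)
      exact (hω p (by lia)).trans (heq.trans (hω q (by lia)).symm)
    · have hinj : Set.InjOn a (Set.Ico (q - k) q) :=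
        injOn_Ico_of_lt_imp_ne fun _ _ => ih hprefix
      have hmem : a q ∈ a '' Set.Ico (q - k) q := ⟨p, ⟨by lia, hpq⟩, heq⟩
      rw [cylinder_succ, hμ.measure_cylinder_inter hkq hinj, if_pos hmem, zero_mul]

lemma injOn_Ico_of_measure_cylinder_ne_zero_s8 (hμ : UniformlyAvoiding k μ) {a : ℕ → Fin σ} {n : ℕ}
    (ha : μ (PiNat.cylinder a n) ≠ 0) : Set.InjOn a (Set.Ico (n - k) n) :=
  injOn_Ico_of_lt_imp_ne fun _ _ => hμ.apply_ne_of_measure_cylinder_ne_zero ha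

lemma nextSymbolProbLE (hμ : UniformlyAvoiding k μ) :
    NextSymbolProbLE μ k ((σ - k : ℕ) : ℝ≥0∞)⁻¹ := by
  intro n hn a b
  by_cases hnull : μ (PiNat.cylinder a n) = 0
  · rw [measure_inter_null_of_null_left _ hnull]
    exact zero_le
  · rw [hμ.measure_cylinder_inter hn (hμ.injOn_Ico_of_measure_cylinder_ne_zero_s8 hnull)]
    gcongr
    split_ifs
    exacts [zero_le, le_rfl]

lemma measure_window_eq_le (hμ : UniformlyAvoiding k μ) (hk : 1 ≤ k) {i j : ℕ} (hij : i < j) :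
    μ {ω | Window k i ω = Window k j ω} ≤ ((σ - k : ℕ) : ℝ≥0∞)⁻¹ ^ k := by
  have := hμ.1
  obtain hjk | hkj := lt_or_ge j k
  · refine (measure_mono_null (fun ω hω => ?_) (hμ.measure_apply_eq_of_lt hij hjk)).trans_le
      zero_le
    exact congrFun hω ⟨0, hk⟩
  · calc μ {ω | Window k i ω = Window k j ω}
        ≤ μ {ω | ∀ t < k, ω (i + t) = ω (j + t)} :=
          measure_mono fun ω hω t ht => congrFun hω ⟨t, ht⟩
      _ ≤ ((σ - k : ℕ) : ℝ≥0∞)⁻¹ ^ k := by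
          simpa using hμ.nextSymbolProbLE.measure_forall_apply_add_eq_le hij hkj k

lemma measure_exists_window_eq_le (hμ : UniformlyAvoiding k μ) (hk : 1 ≤ k) (m : ℕ) :
    μ {ω | ∃ i j, i < j ∧ j < m ∧ Window k i ω = Window k j ω} ≤
      m.choose 2 * ((σ - k : ℕ) : ℝ≥0∞)⁻¹ ^ k :=
  measure_exists_lt_le_choose_two_mul (s := fun i j => {ω | Window k i ω = Window k j ω})
    fun _ _ hij _ => hμ.measure_window_eq_le hk hij

end UniformlyAvoiding

lemma choose_two_mul_inv_pow (n d k : ℕ) :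
    (n.choose 2 : ℝ≥0∞) * (d : ℝ≥0∞)⁻¹ ^ k = ((n * (n - 1) : ℕ) : ℝ≥0∞) / (2 * (d : ℝ≥0∞) ^ k) := by
  rw [← Finset.sum_range_id_mul_two, sum_range_id_eq_choose_two, mul_comm _ 2, Nat.cast_mul,
    Nat.cast_ofNat, ENNReal.mul_div_mul_left _ _ two_ne_zero ENNReal.ofNat_ne_top,
    div_eq_mul_inv, ENNReal.inv_pow]

/-- Quantitative duplicate bound: under any uniformly avoiding source `μ`, for every
`n ≥ k`, the probability that some `k`-tuple occurs twice among the first `n` emitted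
characters is at most `n(n-1)/(2(σ-k)^k)`. -/
theorem duplicate_window_prob_le {σ k : ℕ} (hk : 1 ≤ k) (hσ : k < σ)
    (μ : Measure (ℕ → Fin σ)) (hμ : UniformlyAvoiding k μ)
    (n : ℕ) (hn : k ≤ n) :
    μ {ω | ∃ i j : ℕ, i < j ∧ j ≤ n - k ∧ Window k i ω = Window k j ω} ≤
      ((n * (n - 1) : ℕ) : ℝ≥0∞) / (2 * ((σ - k : ℕ) : ℝ≥0∞) ^ k) := by
  calc μ {ω | ∃ i j : ℕ, i < j ∧ j ≤ n - k ∧ Window k i ω = Window k j ω}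
      = μ {ω | ∃ i j, i < j ∧ j < n - k + 1 ∧ Window k i ω = Window k j ω} := by
        simp only [Nat.lt_succ_iff]
    _ ≤ (n - k + 1).choose 2 * ((σ - k : ℕ) : ℝ≥0∞)⁻¹ ^ k := hμ.measure_exists_window_eq_le hk _
    _ ≤ n.choose 2 * ((σ - k : ℕ) : ℝ≥0∞)⁻¹ ^ k := by
        gcongr
        lia
    _ = ((n * (n - 1) : ℕ) : ℝ≥0∞) / (2 * ((σ - k : ℕ) : ℝ≥0∞) ^ k) :=
        choose_two_mul_inv_pow n (σ - k) k
end
end
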